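/- Conserved current of the dissipative real Klein–Gordon theory (eq. (4.22)): let m ∈ ℝ and let h, c : Fin D → ℝ be constant vectors with Σ_μ c μ · h μ = 2. Let φ : (Fin D → ℝ) → ℝ be a smooth solution of □φ x + Σ_μ h μ · ∂^μ φ x + m²·φ x = 0 for all x (the Euler–Lagrange equation of the dissipative Klein–Gordon Lagrangian exp(Σ_λ h λ·x λ)·((1/2)∂_μφ∂^μφ − (1/2)m²φ²)). Then, with c_ν := Σ_α η ν α · c α, the current j^μ x := exp(Σ_λ h λ · x λ)·( φ x · ∂^μ φ x + Σ_ν c_ν·( ∂^μ φ x·∂^ν φ x − η μ ν·((1/2)·Σ_{α,β} η α β·∂_α φ x·∂_β φ x − (1/2)·m²·(φ x)²) ) ) is conserved: Σ_μ ∂_μ j^μ x = 0 for all x. -/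

import Mathlib

open scoped BigOperators

noncomputable section

/-- Minkowski metric on `Fin D`. -/
def eta (D : ℕ) (μ ν : Fin D) : ℝ :=
  if μ = ν then (if (μ : ℕ) = 0 then 1 else -1) else 0

/-- Spacetime partial derivative `∂_μ F x`. -/
def pd {D : ℕ} (F : (Fin D → ℝ) → ℝ) (μ : Fin D) (x : Fin D → ℝ) : ℝ :=
  fderiv ℝ F x (Pi.single μ 1)

/-- Raised-index partial derivative `∂^μ F x`. -/
def pdu {D : ℕ} (F : (Fin D → ℝ) → ℝ) (μ : Fin D) (x : Fin D → ℝ) : ℝ :=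
  ∑ ν, eta D μ ν * pd F ν x

/-- d'Alembertian `□F x`. -/
def box {D : ℕ} (F : (Fin D → ℝ) → ℝ) (x : Fin D → ℝ) : ℝ :=
  ∑ μ, pd (fun y => pdu F μ y) μ x

def sg (D : ℕ) (μ : Fin D) : ℝ := if (μ : ℕ) = 0 then 1 else -1

lemma sg_sq (D : ℕ) (μ : Fin D) : sg D μ * sg D μ = 1 := by
  unfold sg; split_ifs <;> norm_num

lemma eta_eq (D : ℕ) (μ ν : Fin D) : eta D μ ν = if μ = ν then sg D μ else 0 := rfl

lemma pdu_eq {D : ℕ} (F : (Fin D → ℝ) → ℝ) (μ : Fin D) (x : Fin D → ℝ) :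
    pdu F μ x = sg D μ * pd F μ x := by
  simp [pdu, eta_eq]

lemma pd_differentiable {D : ℕ} {φ : (Fin D → ℝ) → ℝ} (hφ : ContDiff ℝ (⊤ : ℕ∞) φ)
    (μ : Fin D) : Differentiable ℝ (pd φ μ) := by
  have h1 : ContDiff ℝ 1 (fderiv ℝ φ) := hφ.fderiv_right (by norm_cast)
  have h2 := h1.differentiable (by norm_num)
  intro x
  exact (h2 x).clm_apply (differentiableAt_const _)

lemma pd_symm {D : ℕ} {φ : (Fin D → ℝ) → ℝ} (hφ : ContDiff ℝ (⊤ : ℕ∞) φ)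
    (μ ν : Fin D) (x : Fin D → ℝ) : pd (pd φ μ) ν x = pd (pd φ ν) μ x := by
  have h1 : ContDiff ℝ 1 (fderiv ℝ φ) := hφ.fderiv_right (by norm_cast)
  have h2 := h1.differentiable (by norm_num)
  have key : ∀ a b : Fin D, pd (pd φ a) b x
      = fderiv ℝ (fderiv ℝ φ) x (Pi.single b 1) (Pi.single a 1) := by
    intro a b
    have := (h2 x).hasFDerivAt.clm_apply (hasFDerivAt_const (Pi.single a (1:ℝ) : Fin D → ℝ) x)
    have e : pd φ a = fun y => fderiv ℝ φ y (Pi.single a 1) := rfl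
    rw [e, pd, this.fderiv]
    simp
  rw [key, key]
  have hs : IsSymmSndFDerivAt ℝ φ x := by
    apply hφ.contDiffAt.isSymmSndFDerivAt
    simp
    norm_cast
  exact hs _ _

lemma current_eq {D : ℕ} (m : ℝ) (h c : Fin D → ℝ) (φ : (Fin D → ℝ) → ℝ) (μ : Fin D)
    (y : Fin D → ℝ) :
    Real.exp (∑ lam, h lam * y lam) *
          (φ y * pdu φ μ y +
            ∑ ν, (∑ α, eta D ν α * c α) *
              (pdu φ μ y * pdu φ ν y -
                eta D μ ν * ((1/2) * (∑ α, ∑ β, eta D α β * pd φ α y * pd φ β y) -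
                  (1/2) * m^2 * (φ y)^2)))
    = Real.exp (∑ lam, h lam * y lam) *
        (sg D μ * (φ y * pd φ μ y) + sg D μ * (pd φ μ y * ∑ ν, c ν * pd φ ν y)
          - c μ * ((1/2) * (∑ α, sg D α * (pd φ α y * pd φ α y))
            - (1/2) * m^2 * (φ y * φ y))) := by
  simp only [pdu_eq, eta_eq, ite_mul, zero_mul, Finset.sum_ite_eq, Finset.mem_univ, if_true,
    mul_sub, Finset.sum_sub_distrib, mul_ite, mul_zero]
  have e1 : ∑ ν, sg D ν * c ν * (sg D μ * pd φ μ y * (sg D ν * pd φ ν y))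
      = sg D μ * (pd φ μ y * ∑ ν, c ν * pd φ ν y) := by
    rw [Finset.mul_sum, Finset.mul_sum]
    refine Finset.sum_congr rfl fun ν _ => ?_
    linear_combination (c ν * sg D μ * pd φ μ y * pd φ ν y) * sg_sq D ν
  have e2 : ∑ α, sg D α * pd φ α y * pd φ α y = ∑ α, sg D α * (pd φ α y * pd φ α y) :=
    Finset.sum_congr rfl fun ν _ => by ring
  simp only [e1, e2]
  generalize (∑ α, sg D α * (pd φ α y * pd φ α y)) = S
  linear_combination (-Real.exp (∑ lam, h lam * y lam) * c μ *
    (1/2 * S - 1/2 * m^2 * (φ y)^2)) * sg_sq D μ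

lemma pd_current {D : ℕ} (m : ℝ) (h c : Fin D → ℝ) {φ : (Fin D → ℝ) → ℝ}
    (hφ : ContDiff ℝ (⊤ : ℕ∞) φ) (μ : Fin D) (x : Fin D → ℝ) :
    pd (fun y => Real.exp (∑ lam, h lam * y lam) *
        (sg D μ * (φ y * pd φ μ y) + sg D μ * (pd φ μ y * ∑ ν, c ν * pd φ ν y)
          - c μ * ((1/2) * (∑ α, sg D α * (pd φ α y * pd φ α y))
            - (1/2) * m^2 * (φ y * φ y)))) μ x
    = Real.exp (∑ lam, h lam * x lam) *
      (h μ * (sg D μ * (φ x * pd φ μ x) + sg D μ * (pd φ μ x * ∑ ν, c ν * pd φ ν x)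
          - c μ * ((1/2) * (∑ α, sg D α * (pd φ α x * pd φ α x))
            - (1/2) * m^2 * (φ x * φ x)))
      + (sg D μ * (pd φ μ x * pd φ μ x + φ x * pd (pd φ μ) μ x)
        + sg D μ * (pd (pd φ μ) μ x * (∑ ν, c ν * pd φ ν x)
            + pd φ μ x * ∑ ν, c ν * pd (pd φ ν) μ x)
        - c μ * ((∑ α, sg D α * (pd φ α x * pd (pd φ α) μ x))
            - m^2 * (φ x * pd φ μ x)))) := by
  have dφ : HasFDerivAt φ (fderiv ℝ φ x) x :=
    (hφ.differentiable (by simp) x).hasFDerivAt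
  have dp : ∀ a, HasFDerivAt (pd φ a) (fderiv ℝ (pd φ a) x) x :=
    fun a => (pd_differentiable hφ a x).hasFDerivAt
  have dl : HasFDerivAt (fun y : Fin D → ℝ => ∑ lam, h lam * y lam)
      (∑ lam, h lam • (ContinuousLinearMap.proj lam : (Fin D → ℝ) →L[ℝ] ℝ)) x :=
    HasFDerivAt.fun_sum fun a _ => (hasFDerivAt_apply a x).const_mul (h a)
  have dP : HasFDerivAt (fun y => ∑ ν, c ν * pd φ ν y) (∑ ν, c ν • fderiv ℝ (pd φ ν) x) x :=
    HasFDerivAt.fun_sum fun a _ => (dp a).const_mul (c a)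
  have dS := HasFDerivAt.fun_sum (u := Finset.univ)
    fun (a : Fin D) _ => ((dp a).mul (dp a)).const_mul (sg D a)
  have tot := dl.exp.mul ((((dφ.mul (dp μ)).const_mul (sg D μ)).add
    (((dp μ).mul dP).const_mul (sg D μ))).sub
    (((dS.const_mul (1/2)).sub ((dφ.mul dφ).const_mul ((1/2) * m^2))).const_mul (c μ)))
  have tt := congrArg (fun L => L (Pi.single μ 1)) tot.fderiv
  refine Eq.trans tt ?_
  have q : ∀ a, fderiv ℝ (pd φ a) x (Pi.single μ 1) = pd (pd φ a) μ x := fun _ => rfl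
  have q' : fderiv ℝ φ x (Pi.single μ 1) = pd φ μ x := rfl
  have l1 : ∑ a, h a * (Pi.single μ (1:ℝ) : Fin D → ℝ) a = h μ := by
    simp [Pi.single_apply]
  have l2 : ∑ α, sg D α * (pd φ α x * pd (pd φ α) μ x + pd φ α x * pd (pd φ α) μ x)
     = 2 * ∑ α, sg D α * (pd φ α x * pd (pd φ α) μ x) := by
    rw [Finset.mul_sum]; exact Finset.sum_congr rfl fun ν _ => by ring
  simp only [_root_.add_apply, _root_.sub_apply,
    _root_.smul_apply, _root_.sum_apply, smul_eq_mul,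
    ContinuousLinearMap.proj_apply, q, q', l1, l2, Pi.add_apply, Pi.mul_apply, Pi.sub_apply]
  ring

/-- Conserved current of the dissipative real Klein–Gordon theory (eq. (4.22)). -/
theorem dissipative_klein_gordon_conserved_current {D : ℕ} (hD : 1 ≤ D)
    (m : ℝ) (h c : Fin D → ℝ) (hch : ∑ μ, c μ * h μ = 2)
    (φ : (Fin D → ℝ) → ℝ) (hφ : ContDiff ℝ (⊤ : ℕ∞) φ)
    (hEL : ∀ x, box φ x + (∑ μ, h μ * pdu φ μ x) + m^2 * φ x = 0) :
    ∀ x, ∑ μ, pd (fun y =>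
        Real.exp (∑ lam, h lam * y lam) *
          (φ y * pdu φ μ y +
            ∑ ν, (∑ α, eta D ν α * c α) *
              (pdu φ μ y * pdu φ ν y -
                eta D μ ν * ((1/2) * (∑ α, ∑ β, eta D α β * pd φ α y * pd φ β y) -
                  (1/2) * m^2 * (φ y)^2))) ) μ x = 0 := by
  intro x
  simp only [current_eq]
  simp only [pd_current m h c hφ]
  rw [← Finset.mul_sum]
  apply mul_eq_zero_of_right
  have hx := hEL x
  have hb : box φ x = ∑ μ, sg D μ * pd (pd φ μ) μ x := by
    unfold box
    refine Finset.sum_congr rfl fun μ _ => ?_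
    simp only [pdu_eq]
    have := ((pd_differentiable hφ μ x).hasFDerivAt.const_mul (sg D μ)).fderiv
    refine (congrArg (fun L => L (Pi.single μ 1)) this).trans ?_
    rfl
  rw [hb] at hx
  simp only [pdu_eq] at hx
  have hsw : ∑ μ, sg D μ * (pd φ μ x * ∑ ν, c ν * pd (pd φ ν) μ x)
      = ∑ μ, c μ * ∑ α, sg D α * (pd φ α x * pd (pd φ α) μ x) := by
    simp only [Finset.mul_sum]
    rw [Finset.sum_comm]
    refine Finset.sum_congr rfl fun a _ => Finset.sum_congr rfl fun b _ => ?_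
    rw [pd_symm hφ a b]; ring
  set P := ∑ ν, c ν * pd φ ν x with hP
  set S := ∑ α, sg D α * (pd φ α x * pd φ α x) with hS
  set B := ∑ μ, sg D μ * pd (pd φ μ) μ x with hB
  set H := ∑ μ, h μ * (sg D μ * pd φ μ x) with hH
  have split : ∀ μ, (h μ * (sg D μ * (φ x * pd φ μ x) + sg D μ * (pd φ μ x * P)
          - c μ * ((1/2) * S - (1/2) * m^2 * (φ x * φ x)))
      + (sg D μ * (pd φ μ x * pd φ μ x + φ x * pd (pd φ μ) μ x)
        + sg D μ * (pd (pd φ μ) μ x * P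
            + pd φ μ x * ∑ ν, c ν * pd (pd φ ν) μ x)
        - c μ * ((∑ α, sg D α * (pd φ α x * pd (pd φ α) μ x))
            - m^2 * (φ x * pd φ μ x))))
      = (φ x + P) * (h μ * (sg D μ * pd φ μ x))
        + (-((1/2) * S - (1/2) * m^2 * (φ x * φ x))) * (c μ * h μ)
        + sg D μ * (pd φ μ x * pd φ μ x)
        + (φ x + P) * (sg D μ * pd (pd φ μ) μ x)
        + sg D μ * (pd φ μ x * ∑ ν, c ν * pd (pd φ ν) μ x)
        + (-1) * (c μ * ∑ α, sg D α * (pd φ α x * pd (pd φ α) μ x))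
        + m^2 * φ x * (c μ * pd φ μ x) := fun μ => by ring
  rw [Finset.sum_congr rfl fun μ _ => split μ]
  simp only [Finset.sum_add_distrib]
  rw [hsw]
  simp only [← Finset.mul_sum _ _ (_ : ℝ)]
  rw [hch, ← hP, ← hS, ← hB, ← hH]
  linear_combination (φ x + P) * hx

end
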